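/- arXiv:2507.07606 — 2 statements merged into one kernel-verified Lean document; each statement's English description precedes it below -/
import Mathlib

section
/- A permutation is separable (i.e., obtainable from the trivial one-element permutation by iterated direct sums and skew sums) if and only if it does not contain the permutations 1302 and 2031 as sub-patterns (i.e., no 4 positions i<j<k<l in the permutation realize the relative order pattern of 1302 or of 2031). -/
/-- `t` is a sub-pattern of the permutation (given as the list of its values) `l`:
some increasing choice of positions in `l` realizes the relative order of `t`. -/
def SubPattern (t l : List ℕ) : Prop :=
  ∃ s : Fin t.length → Fin l.length, StrictMono s ∧
    ∀ a b : Fin t.length, l.get (s a) < l.get (s b) ↔ t.get a < t.get b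

/-- Separable permutations: obtained from the trivial one-element permutation by
iterated direct sums and skew sums. -/
inductive SeparablePerm : List ℕ → Prop
  | trivial : SeparablePerm [0]
  | directSum {l₁ l₂ : List ℕ} : SeparablePerm l₁ → SeparablePerm l₂ →
      SeparablePerm (l₁ ++ l₂.map (· + l₁.length))
  | skewSum {l₁ l₂ : List ℕ} : SeparablePerm l₁ → SeparablePerm l₂ →
      SeparablePerm (l₁.map (· + l₂.length) ++ l₂)

/-- `l` contains four entries `w, x, y, z`, in this order, with `y < w < z < x` for the
relation `r`. For `r = (<)` this is the pattern `1302`, for `r = (>)` the pattern `2031`. -/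
def HasPattern {α : Type*} (r : α → α → Prop) (l : List α) : Prop :=
  ∃ w x y z, [w, x, y, z].Sublist l ∧ r y w ∧ r w z ∧ r z x

/-- `l` is the concatenation of two nonempty lists, the first lying entirely `r`-below the
second. -/
def Splits {α : Type*} (r : α → α → Prop) (l : List α) : Prop :=
  ∃ A B, A ≠ [] ∧ B ≠ [] ∧ l = A ++ B ∧ ∀ a ∈ A, ∀ b ∈ B, r a b

section Relation

variable {α : Type*} {r : α → α → Prop}

theorem HasPattern.mono {l l' : List α} (h : HasPattern r l) (hl : l.Sublist l') :
    HasPattern r l' := by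
  obtain ⟨w, x, y, z, hs, h⟩ := h
  exact ⟨w, x, y, z, hs.trans hl, h⟩

theorem HasPattern.of_map {β : Type*} {s : β → β → Prop} {f : β → α} {l : List β}
    (hf : ∀ a ∈ l, ∀ b ∈ l, r (f a) (f b) → s a b) (h : HasPattern r (l.map f)) :
    HasPattern s l := by
  obtain ⟨w, x, y, z, hs, h1, h2, h3⟩ := h
  obtain ⟨u, hu, he⟩ := List.sublist_map_iff.1 hs
  match u, he with
  | [w', x', y', z'], he =>
    simp only [List.map_cons, List.map_nil, List.cons.injEq, and_true] at he
    obtain ⟨rfl, rfl, rfl, rfl⟩ := he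
    have hw : w' ∈ l := hu.subset (by simp)
    have hx : x' ∈ l := hu.subset (by simp)
    have hy : y' ∈ l := hu.subset (by simp)
    have hz : z' ∈ l := hu.subset (by simp)
    exact ⟨w', x', y', z', hu, hf _ hy _ hw h1, hf _ hw _ hz h2, hf _ hz _ hx h3⟩

theorem HasPattern.of_append [IsStrictOrder α r] {A B : List α}
    (hAB : (∀ a ∈ A, ∀ b ∈ B, r a b) ∨ ∀ a ∈ A, ∀ b ∈ B, r b a)
    (h : HasPattern r (A ++ B)) : HasPattern r A ∨ HasPattern r B := by
  obtain ⟨w, x, y, z, hs, h1, h2, h3⟩ := h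
  have tr : ∀ {a b c}, r a b → r b c → r a c := fun h h' => _root_.trans h h'
  have asy : ∀ {a b}, r a b → ¬ r b a := fun h h' => _root_.asymm h h'
  obtain ⟨u, v, huv, hu, hv⟩ := List.sublist_append_iff.1 hs
  match u, huv with
  | [], huv => exact .inr ⟨w, x, y, z, by simpa [huv] using hv, h1, h2, h3⟩
  | [a], huv =>
    simp only [List.cons_append, List.nil_append, List.cons.injEq] at huv
    obtain ⟨rfl, rfl⟩ := huv
    have hw : w ∈ A := hu.subset (by simp)
    have hy : y ∈ B := hv.subset (by simp)
    have hz : z ∈ B := hv.subset (by simp)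
    rcases hAB with H | H
    · exact (asy h1 (H _ hw _ hy)).elim
    · exact (asy h2 (H _ hw _ hz)).elim
  | [a, b], huv =>
    simp only [List.cons_append, List.nil_append, List.cons.injEq] at huv
    obtain ⟨rfl, rfl, rfl⟩ := huv
    have hw : w ∈ A := hu.subset (by simp)
    have hy : y ∈ B := hv.subset (by simp)
    have hz : z ∈ B := hv.subset (by simp)
    rcases hAB with H | H
    · exact (asy h1 (H _ hw _ hy)).elim
    · exact (asy h2 (H _ hw _ hz)).elim
  | [a, b, c], huv =>
    simp only [List.cons_append, List.nil_append, List.cons.injEq] at huv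
    obtain ⟨rfl, rfl, rfl, rfl⟩ := huv
    have hw : w ∈ A := hu.subset (by simp)
    have hx : x ∈ A := hu.subset (by simp)
    have hz : z ∈ B := hv.subset (by simp)
    rcases hAB with H | H
    · exact (asy h3 (H _ hx _ hz)).elim
    · exact (asy h2 (H _ hw _ hz)).elim
  | [a, b, c, d], huv =>
    simp only [List.cons_append, List.nil_append, List.cons.injEq] at huv
    obtain ⟨rfl, rfl, rfl, rfl, rfl⟩ := huv
    exact .inl ⟨w, x, y, z, hu, h1, h2, h3⟩
  | a :: b :: c :: d :: e :: t, huv => simp at huv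

/-- A list that splits does so with a second part that does not split further. -/
theorem Splits.exists_not_splits_right {l : List α} (h : Splits r l) :
    ∃ A B, A ≠ [] ∧ B ≠ [] ∧ l = A ++ B ∧ (∀ a ∈ A, ∀ b ∈ B, r a b) ∧ ¬ Splits r B := by
  induction hn : l.length using Nat.strong_induction_on generalizing l with
  | _ n ih =>
    obtain ⟨A, B, hA, hB, rfl, hAB⟩ := h
    by_cases hs : Splits r B
    · have hlt : B.length < n := by
        have := List.length_pos_iff.2 hA
        simp at hn
        omega
      obtain ⟨C, D, hC, hD, rfl, hCD, hn⟩ := ih _ hlt hs rfl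
      refine ⟨A ++ C, D, by simp [hA], hD, by simp, ?_, hn⟩
      intro a ha b hb
      rcases List.mem_append.1 ha with ha | ha
      · exact hAB a ha b (List.mem_append_right _ hb)
      · exact hCD a ha b hb
    · exact ⟨A, B, hA, hB, rfl, hAB, hs⟩

theorem Splits.cons [IsStrictTotalOrder α r] {a : α} {l : List α} (hnd : (a :: l).Nodup)
    (hpat : ¬ HasPattern (Function.swap r) (a :: l)) (hl : Splits r l)
    (ih : ∀ B : List α, B.Sublist l → 2 ≤ B.length → Splits r B ∨ Splits (Function.swap r) B) :
    Splits r (a :: l) ∨ Splits (Function.swap r) (a :: l) := by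
  obtain ⟨A, B, hA, hB, rfl, hAB, hns⟩ := hl.exists_not_splits_right
  have ne : ∀ x ∈ A ++ B, x ≠ a := fun x hx h => (List.nodup_cons.1 hnd).1 (h ▸ hx)
  have tri : ∀ x ∈ A ++ B, ¬ r a x → r x a := fun x hx h =>
    ((trichotomous_of r a x).resolve_left h).resolve_left (ne x hx).symm
  have tr : ∀ {a b c}, r a b → r b c → r a c := fun h h' => _root_.trans h h'
  by_cases h1 : ∀ b ∈ B, r a b
  · refine .inl ⟨a :: A, B, by simp, hB, by simp, ?_⟩
    simpa using ⟨h1, hAB⟩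
  push Not at h1
  obtain ⟨b, hb, hab⟩ := h1
  have hba := tri b (List.mem_append_right _ hb) hab
  have hAa : ∀ x ∈ A, r x a := fun x hx => tr (hAB x hx b hb) hba
  by_cases h2 : ∀ b ∈ B, r b a
  · refine .inr ⟨[a], A ++ B, by simp, by simp [hA], by simp, ?_⟩
    intro x hx y hy
    obtain rfl := List.mem_singleton.1 hx
    exact (List.mem_append.1 hy).elim (hAa y) (h2 y)
  push Not at h2
  obtain ⟨b', hb', hba'⟩ := h2
  have hab' : r a b' := by
    by_contra h
    exact hba' (tri b' (List.mem_append_right _ hb') h)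
  have hlen : 2 ≤ B.length := by
    match B, hb, hb' with
    | [c], hb, hb' =>
      obtain rfl := List.mem_singleton.1 hb
      obtain rfl := List.mem_singleton.1 hb'
      exact (hba' hba).elim
    | c :: d :: t, _, _ => simp
  obtain ⟨C, D, hC, hD, rfl, hCD⟩ := (ih B (List.sublist_append_right _ _) hlen).resolve_left hns
  obtain ⟨x, hx⟩ := List.exists_mem_of_ne_nil A hA
  have key : ∀ c ∈ C, ∀ d ∈ D, r a c → ¬ r d a := by
    intro c hc d hd hac hda
    refine hpat ⟨a, x, c, d, ?_, hac, hda, hAB x hx d (List.mem_append_right _ hd)⟩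
    exact List.Sublist.cons_cons a ((List.singleton_sublist.2 hx).append
      ((List.singleton_sublist.2 hc).append (List.singleton_sublist.2 hd)))
  obtain ⟨c, hc⟩ := List.exists_mem_of_ne_nil C hC
  obtain ⟨d, hd⟩ := List.exists_mem_of_ne_nil D hD
  exfalso
  have hac : ∃ c ∈ C, r a c := by
    rcases List.mem_append.1 hb' with h | h
    · exact ⟨b', h, hab'⟩
    · exact ⟨c, hc, tr hab' (hCD c hc b' h)⟩
  have hda : ∃ d ∈ D, r d a := by
    rcases List.mem_append.1 hb with h | h
    · exact ⟨d, hd, tr (hCD b h d hd) hba⟩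
    · exact ⟨b, h, hba⟩
  obtain ⟨c, hc, hac⟩ := hac
  obtain ⟨d, hd, hda⟩ := hda
  exact key c hc d hd hac hda

theorem splits_or_splits_swap [IsStrictTotalOrder α r] {l : List α} (hnd : l.Nodup)
    (hlen : 2 ≤ l.length) (h1 : ¬ HasPattern r l) (h2 : ¬ HasPattern (Function.swap r) l) :
    Splits r l ∨ Splits (Function.swap r) l := by
  induction hn : l.length using Nat.strong_induction_on generalizing l with
  | _ n ih =>
    match l, hlen with
    | [a, b], _ =>
      have hab : a ≠ b := by simpa using hnd
      rcases trichotomous_of r a b with h | h | h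
      · exact .inl ⟨[a], [b], by simp, by simp, rfl, by simpa using h⟩
      · exact (hab h).elim
      · exact .inr ⟨[a], [b], by simp, by simp, rfl, by simpa using h⟩
    | a :: b :: c :: t, _ =>
      have ih' : ∀ B : List α, B.Sublist (b :: c :: t) → 2 ≤ B.length →
          Splits r B ∨ Splits (Function.swap r) B := by
        intro B hB hB2
        have hs : B.Sublist (a :: b :: c :: t) := hB.cons a
        refine ih _ ?_ (hnd.sublist hs) hB2 (fun h => h1 (h.mono hs)) (fun h => h2 (h.mono hs)) rfl
        have := hB.length_le
        simp at this hn
        omega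
      rcases ih' _ (List.Sublist.refl _) (by simp) with h | h
      · exact h.cons hnd h2 ih'
      · exact (h.cons hnd h1 fun B hB hB2 => (ih' B hB hB2).symm).symm

end Relation

theorem subPattern_1302_iff {l : List ℕ} : SubPattern [1, 3, 0, 2] l ↔ HasPattern (· < ·) l := by
  constructor
  · rintro ⟨s, hs, h⟩
    refine ⟨l.get (s 0), l.get (s 1), l.get (s 2), l.get (s 3), ?_, (h 2 0).2 (by simp),
      (h 0 3).2 (by simp), (h 3 1).2 (by simp)⟩
    refine List.sublist_iff_exists_fin_orderEmbedding_get_eq.2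
      ⟨OrderEmbedding.ofStrictMono s hs, fun i => ?_⟩
    fin_cases i <;> rfl
  · rintro ⟨w, x, y, z, hs, h1, h2, h3⟩
    obtain ⟨f, hf⟩ := List.sublist_iff_exists_fin_orderEmbedding_get_eq.1 hs
    refine ⟨f, f.strictMono, fun a b => ?_⟩
    refine (iff_of_eq (congrArg₂ (· < ·) (hf a) (hf b))).symm.trans ?_
    fin_cases a <;> fin_cases b <;> simp <;> omega

theorem subPattern_2031_iff {l : List ℕ} :
    SubPattern [2, 0, 3, 1] l ↔ HasPattern (Function.swap (· < ·)) l := by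
  constructor
  · rintro ⟨s, hs, h⟩
    refine ⟨l.get (s 0), l.get (s 1), l.get (s 2), l.get (s 3), ?_, (h 0 2).2 (by simp),
      (h 3 0).2 (by simp), (h 1 3).2 (by simp)⟩
    refine List.sublist_iff_exists_fin_orderEmbedding_get_eq.2
      ⟨OrderEmbedding.ofStrictMono s hs, fun i => ?_⟩
    fin_cases i <;> rfl
  · rintro ⟨w, x, y, z, hs, h1, h2, h3⟩
    simp only [Function.swap] at h1 h2 h3
    obtain ⟨f, hf⟩ := List.sublist_iff_exists_fin_orderEmbedding_get_eq.1 hs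
    refine ⟨f, f.strictMono, fun a b => ?_⟩
    refine (iff_of_eq (congrArg₂ (· < ·) (hf a) (hf b))).symm.trans ?_
    fin_cases a <;> fin_cases b <;> simp <;> omega

theorem List.perm_range_length_iff {l : List ℕ} :
    l.Perm (List.range l.length) ↔ l.Nodup ∧ ∀ x ∈ l, x < l.length := by
  constructor
  · intro h
    exact ⟨h.nodup_iff.2 List.nodup_range, fun x hx => List.mem_range.1 (h.subset hx)⟩
  · rintro ⟨hnd, hlt⟩
    exact (hnd.subperm fun x hx => List.mem_range.2 (hlt x hx)).perm_of_length_le (by simp)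

/-- If a permutation is the concatenation, in some order, of `A` and of a list `B` of larger
values, then `A` is a permutation, and so is `B` after shifting its values down. -/
theorem perm_range_of_append_perm {A B : List ℕ}
    (h : (A ++ B).Perm (List.range (A ++ B).length)) (hAB : ∀ a ∈ A, ∀ b ∈ B, a < b) :
    A.Perm (List.range A.length) ∧ ∃ B' : List ℕ, B = B'.map (· + A.length) ∧
      B'.Perm (List.range B'.length) := by
  obtain ⟨hnd, hlt⟩ := List.perm_range_length_iff.1 h
  obtain ⟨hA, hB, -⟩ := List.nodup_append.1 hnd
  have hAp : A.Perm (List.range A.length) := by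
    refine List.perm_range_length_iff.2 ⟨hA, fun a ha => ?_⟩
    have hsub : List.range (a + 1) ⊆ A := by
      intro x hx
      have hxa : x ≤ a := Nat.lt_succ_iff.1 (List.mem_range.1 hx)
      have hx' : x ∈ A ++ B := h.mem_iff.2
        (List.mem_range.2 (hxa.trans_lt (hlt a (List.mem_append_left _ ha))))
      refine (List.mem_append.1 hx').resolve_right fun hxB => ?_
      exact absurd (hAB a ha x hxB) (by omega)
    simpa using (List.nodup_range.subperm hsub).length_le
  have hge : ∀ b ∈ B, A.length ≤ b := by
    intro b hb
    by_contra hlt'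
    exact lt_irrefl b (hAB b (hAp.mem_iff.2 (List.mem_range.2 (by omega))) b hb)
  have hmap : B = (B.map (· - A.length)).map (· + A.length) := by
    rw [List.map_map]
    conv_lhs => rw [← List.map_id B]
    refine List.map_congr_left fun b hb => ?_
    have := hge b hb
    simp
    omega
  refine ⟨hAp, _, hmap, List.perm_range_length_iff.2 ⟨?_, ?_⟩⟩
  · rw [hmap] at hB
    exact hB.of_map _
  · intro x hx
    obtain ⟨b, hb, rfl⟩ := List.mem_map.1 hx
    have h1 := hge b hb
    have h2 := hlt b (List.mem_append_right _ hb)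
    simp at h2 ⊢
    omega

theorem SeparablePerm.lt_length {l : List ℕ} (h : SeparablePerm l) : ∀ x ∈ l, x < l.length := by
  induction h with
  | trivial => simp
  | directSum _ _ ih₁ ih₂ | skewSum _ _ ih₁ ih₂ =>
    intro x hx
    simp only [List.mem_append, List.mem_map, List.length_append, List.length_map] at hx ⊢
    grind

theorem SeparablePerm.not_hasPattern {r : ℕ → ℕ → Prop} [IsStrictOrder ℕ r]
    (hr : r = (· < ·) ∨ r = Function.swap (· < ·)) {l : List ℕ} (h : SeparablePerm l) :
    ¬ HasPattern r l := by
  have hadd : ∀ k a b, r (a + k) (b + k) → r a b := by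
    rcases hr with rfl | rfl <;> simp [Function.swap]
  induction h with
  | trivial =>
    rintro ⟨w, x, y, z, hs, -⟩
    simpa using hs.length_le
  | @directSum l₁ l₂ h₁ h₂ ih₁ ih₂ =>
    intro h
    have hlt : ∀ a ∈ l₁, ∀ b ∈ l₂.map (· + l₁.length), a < b := by
      intro a ha b hb
      obtain ⟨c, -, rfl⟩ := List.mem_map.1 hb
      exact (h₁.lt_length a ha).trans_le (Nat.le_add_left _ _)
    rcases h.of_append (by rcases hr with rfl | rfl <;> simp only [Function.swap] <;> tauto)
      with h | h
    · exact ih₁ h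
    · exact ih₂ (h.of_map fun a _ b _ => hadd _ a b)
  | @skewSum l₁ l₂ h₁ h₂ ih₁ ih₂ =>
    intro h
    have hlt : ∀ a ∈ l₁.map (· + l₂.length), ∀ b ∈ l₂, b < a := by
      intro a ha b hb
      obtain ⟨c, -, rfl⟩ := List.mem_map.1 ha
      exact (h₂.lt_length b hb).trans_le (Nat.le_add_left _ _)
    rcases h.of_append (by rcases hr with rfl | rfl <;> simp only [Function.swap] <;> tauto)
      with h | h
    · exact ih₁ (h.of_map fun a _ b _ => hadd _ a b)
    · exact ih₂ h

theorem HasPattern.map_add_right {r : ℕ → ℕ → Prop} (k : ℕ)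
    (hr : ∀ a b, r a b → r (a + k) (b + k)) {l : List ℕ} (h : HasPattern r l) :
    HasPattern r (l.map (· + k)) := by
  obtain ⟨w, x, y, z, hs, h1, h2, h3⟩ := h
  exact ⟨_, _, _, _, hs.map (· + k), hr _ _ h1, hr _ _ h2, hr _ _ h3⟩

theorem separablePerm_of_not_hasPattern {l : List ℕ} (hne : l ≠ [])
    (hperm : l.Perm (List.range l.length)) (h1 : ¬ HasPattern (· < ·) l)
    (h2 : ¬ HasPattern (Function.swap (· < ·)) l) : SeparablePerm l := by
  induction hn : l.length using Nat.strong_induction_on generalizing l with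
  | _ n ih =>
    obtain ⟨hnd, hlt⟩ := List.perm_range_length_iff.1 hperm
    by_cases hlen : 2 ≤ l.length
    · rcases splits_or_splits_swap hnd hlen h1 h2 with
        ⟨A, B, hA, hB, rfl, hAB⟩ | ⟨A, B, hA, hB, rfl, hAB⟩
      · obtain ⟨hAp, B, rfl, hBp⟩ := perm_range_of_append_perm hperm hAB
        have hA0 := List.length_pos_iff.2 hA
        have hB0 := List.length_pos_iff.2 hB
        simp only [List.length_append, List.length_map] at hn hB0
        refine .directSum (ih _ (by omega) hA hAp ?_ ?_ rfl)
          (ih _ (by omega) (by simpa using hB) hBp ?_ ?_ rfl)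
        · exact fun h => h1 (h.mono (List.sublist_append_left _ _))
        · exact fun h => h2 (h.mono (List.sublist_append_left _ _))
        · exact fun h => h1 ((h.map_add_right _ (by simp)).mono (List.sublist_append_right _ _))
        · exact fun h => h2 ((h.map_add_right _ (by simp [Function.swap])).mono
            (List.sublist_append_right _ _))
      · have hBA : (B ++ A).Perm (List.range (B ++ A).length) := by
          have := List.perm_append_comm.trans hperm
          simpa [add_comm] using this
        obtain ⟨hBp, A, rfl, hAp⟩ :=
          perm_range_of_append_perm hBA fun b hb a ha => hAB a ha b hb
        have hA0 := List.length_pos_iff.2 hA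
        have hB0 := List.length_pos_iff.2 hB
        simp only [List.length_append, List.length_map] at hn hA0
        refine .skewSum (ih _ (by omega) (by simpa using hA) hAp ?_ ?_ rfl)
          (ih _ (by omega) hB hBp ?_ ?_ rfl)
        · exact fun h => h1 ((h.map_add_right _ (by simp)).mono (List.sublist_append_left _ _))
        · exact fun h => h2 ((h.map_add_right _ (by simp [Function.swap])).mono
            (List.sublist_append_left _ _))
        · exact fun h => h1 (h.mono (List.sublist_append_right _ _))
        · exact fun h => h2 (h.mono (List.sublist_append_right _ _))
    · match l, hne with
      | [a], _ =>
        obtain rfl : a = 0 := by simpa using hlt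
        exact .trivial
      | a :: b :: t, _ => simp at hlen

theorem separable_iff_avoids_1302_and_2031 (l : List ℕ) (hne : l ≠ [])
    (hperm : l.Perm (List.range l.length)) :
    SeparablePerm l ↔ ¬ SubPattern [1, 3, 0, 2] l ∧ ¬ SubPattern [2, 0, 3, 1] l := by
  rw [subPattern_1302_iff, subPattern_2031_iff]
  constructor
  · intro h
    have : IsStrictOrder ℕ (Function.swap (· < ·)) := {}
    exact ⟨h.not_hasPattern (.inl rfl), h.not_hasPattern (.inr rfl)⟩
  · rintro ⟨h1, h2⟩
    exact separablePerm_of_not_hasPattern hne hperm h1 h2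
end

section
/- There exists a computable linear order L = (ℕ, <_L) of order type ω + ω* that avoids the permutations 1302 and 2031, such that no infinite L-ascending or L-descending sequence is computable from L (equivalently, computable). -/
/-- `r` (as a boolean relation) is a strict linear order on ℕ. -/
def IsLinearRel (r : ℕ → ℕ → Bool) : Prop :=
  (∀ x, r x x = false) ∧
  (∀ x y z, r x y = true → r y z = true → r x z = true) ∧
  (∀ x y, x ≠ y → r x y = true ∨ r y x = true)

/-- The order has type `ω + ω*`. -/
def OrderTypeOmegaPlusOmegaStar (r : ℕ → ℕ → Bool) : Prop :=
  (∀ x, {y | r y x = true}.Finite ∨ {y | r x y = true}.Finite) ∧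
  {x | {y | r y x = true}.Finite}.Infinite ∧
  {x | {y | r x y = true}.Finite}.Infinite

/-- Some increasing tuple of naturals realizes in the order `r` the relative order of the
permutation `t`. -/
def LRealizes (r : ℕ → ℕ → Bool) (t : List ℕ) : Prop :=
  ∃ s : Fin t.length → ℕ, StrictMono s ∧
    ∀ i j : Fin t.length, i < j → (r (s i) (s j) = true ↔ t.get i < t.get j)

open Nat.Partrec (Code)

/-- The minimum of `b` and of the values `a u` for `x < u < y`. -/
def minBetween (a : ℕ → ℕ) (b x : ℕ) : ℕ → ℕ
  | 0 => b
  | y + 1 => if x < y then min (minBetween a b x y) (a y) else minBetween a b x y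

theorem le_minBetween {a : ℕ → ℕ} {b x p : ℕ} (y : ℕ) :
    p ≤ minBetween a b x y ↔ p ≤ b ∧ ∀ u, x < u → u < y → p ≤ a u := by
  induction y with
  | zero => simp [minBetween]
  | succ y ih =>
    rw [minBetween]
    split_ifs with h
    · rw [le_min_iff, ih]
      constructor
      · rintro ⟨⟨hb, hu⟩, hy⟩
        refine ⟨hb, fun u hxu huy => ?_⟩
        rcases Nat.lt_succ_iff_lt_or_eq.1 huy with h' | rfl
        · exact hu u hxu h'
        · exact hy
      · rintro ⟨hb, hu⟩
        exact ⟨⟨hb, fun u hxu huy => hu u hxu (by omega)⟩, hu y h (by omega)⟩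
    · rw [ih]
      constructor
      · rintro ⟨hb, hu⟩
        exact ⟨hb, fun u hxu huy => hu u hxu (by omega)⟩
      · rintro ⟨hb, hu⟩
        exact ⟨hb, fun u hxu huy => hu u hxu (by omega)⟩

theorem minBetween_congr {a a' : ℕ → ℕ} {b x y : ℕ} (h : ∀ u < y, a u = a' u) :
    minBetween a b x y = minBetween a' b x y := by
  refine eq_of_forall_le_iff fun p => ?_
  simp only [le_minBetween]
  exact and_congr_right fun _ => forall_congr' fun u => forall_congr' fun _ =>
    forall_congr' fun hu => by rw [h u hu]

theorem Primrec.minBetween {α : Type*} [Primcodable α] {a : α → ℕ → ℕ} {b x y : α → ℕ}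
    (ha : Primrec₂ a) (hb : Primrec b) (hx : Primrec x) (hy : Primrec y) :
    Primrec fun i => minBetween (a i) (b i) (x i) (y i) := by
  refine (Primrec.nat_rec' (g := b)
    (h := fun i q => if x i < q.1 then min q.2 (a i q.1) else q.2) hy hb ?_).of_eq fun i => ?_
  · refine Primrec.ite (Primrec.nat_lt.comp (hx.comp fst) (fst.comp snd)) ?_ (snd.comp snd)
    exact Primrec.nat_min.comp (snd.comp snd) (ha.comp fst (fst.comp snd))
  · induction y i with
    | zero => rfl
    | succ n ih => simp only [_root_.minBetween, ← ih]

/-- The minimum of `a` on the interval `(x, y]`, for `x < y`. -/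
def minIoc (a : ℕ → ℕ) (x y : ℕ) : ℕ := minBetween a (a y) x y

theorem le_minIoc {a : ℕ → ℕ} {x y p : ℕ} (h : x < y) :
    p ≤ minIoc a x y ↔ ∀ u, x < u → u ≤ y → p ≤ a u := by
  rw [minIoc, le_minBetween]
  constructor
  · rintro ⟨hy, hu⟩ u hxu huy
    rcases huy.lt_or_eq with h' | rfl
    · exact hu u hxu h'
    · exact hy
  · exact fun hu => ⟨hu y h le_rfl, fun u hxu huy => hu u hxu huy.le⟩

theorem minIoc_split {a : ℕ → ℕ} {x y z : ℕ} (hxy : x < y) (hyz : y < z) :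
    minIoc a x z = min (minIoc a x y) (minIoc a y z) := by
  refine eq_of_forall_le_iff fun p => ?_
  rw [le_min_iff, le_minIoc hxy, le_minIoc hyz, le_minIoc (hxy.trans hyz)]
  constructor
  · exact fun h => ⟨fun u h₁ h₂ => h u h₁ (by omega), fun u h₁ h₂ => h u (by omega) h₂⟩
  · rintro ⟨h₁, h₂⟩ u hu hu'
    rcases le_or_gt u y with h | h
    · exact h₁ u hu h
    · exact h₂ u h hu'

theorem minIoc_eq_of_forall_le {a : ℕ → ℕ} {x y u : ℕ} (hxu : x < u) (huy : u ≤ y)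
    (h : ∀ v, x < v → v ≤ y → a u ≤ a v) : minIoc a x y = a u :=
  le_antisymm ((le_minIoc (hxu.trans_le huy)).1 le_rfl u hxu huy)
    ((le_minIoc (hxu.trans_le huy)).2 h)

theorem exists_minIoc_eventually_eq (a : ℕ → ℕ) (x : ℕ) :
    ∃ c N, x < N ∧ ∀ y, N ≤ y → minIoc a x y = c := by
  obtain ⟨u, hu, hmin⟩ := exists_minimalFor_of_wellFoundedLT (fun u => x < u) a ⟨x + 1, by simp⟩
  exact ⟨a u, u, hu, fun y hy => minIoc_eq_of_forall_le hu hy fun v hv _ =>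
    (le_total (a u) (a v)).elim id fun h => hmin hv h⟩

/-- For `x < y`, the number `y` is above `x` exactly when the minimum of `a` on `(x, y]`
is even. -/
def parityOrder (a : ℕ → ℕ) (x y : ℕ) : Bool :=
  if x < y then minIoc a x y % 2 == 0 else if y < x then minIoc a y x % 2 == 1 else false

theorem parityOrder_of_lt {a : ℕ → ℕ} {x y : ℕ} (h : x < y) :
    parityOrder a x y = true ↔ minIoc a x y % 2 = 0 := by
  simp [parityOrder, h]

theorem parityOrder_of_gt {a : ℕ → ℕ} {x y : ℕ} (h : y < x) :
    parityOrder a x y = true ↔ minIoc a y x % 2 = 1 := by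
  simp [parityOrder, h, h.not_gt]

theorem parityOrder_self (a : ℕ → ℕ) (x : ℕ) : parityOrder a x x = false := by
  simp [parityOrder]

theorem parityOrder_trans (a : ℕ → ℕ) (x y z : ℕ) (hxy : parityOrder a x y = true)
    (hyz : parityOrder a y z = true) : parityOrder a x z = true := by
  rcases lt_trichotomy x y with h₁ | rfl | h₁
  · rw [parityOrder_of_lt h₁] at hxy
    rcases lt_trichotomy y z with h₂ | rfl | h₂
    · rw [parityOrder_of_lt h₂] at hyz
      rw [parityOrder_of_lt (h₁.trans h₂), minIoc_split h₁ h₂]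
      omega
    · rwa [parityOrder_of_lt h₁]
    · rw [parityOrder_of_gt h₂] at hyz
      rcases lt_trichotomy x z with h₃ | rfl | h₃
      · rw [minIoc_split h₃ h₂] at hxy
        rw [parityOrder_of_lt h₃]
        omega
      · omega
      · rw [minIoc_split h₃ h₁] at hyz
        rw [parityOrder_of_gt h₃]
        omega
  · exact hyz
  · rw [parityOrder_of_gt h₁] at hxy
    rcases lt_trichotomy y z with h₂ | rfl | h₂
    · rw [parityOrder_of_lt h₂] at hyz
      rcases lt_trichotomy x z with h₃ | rfl | h₃
      · rw [minIoc_split h₁ h₃] at hyz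
        rw [parityOrder_of_lt h₃]
        omega
      · omega
      · rw [minIoc_split h₂ h₃] at hxy
        rw [parityOrder_of_gt h₃]
        omega
    · rwa [parityOrder_of_gt h₁]
    · rw [parityOrder_of_gt h₂] at hyz
      rw [parityOrder_of_gt (h₂.trans h₁), minIoc_split h₂ h₁]
      omega

theorem isLinearRel_parityOrder (a : ℕ → ℕ) : IsLinearRel (parityOrder a) := by
  refine ⟨parityOrder_self a, parityOrder_trans a, fun x y hxy => ?_⟩
  rcases hxy.lt_or_gt with h | h
  · rw [parityOrder_of_lt h, parityOrder_of_gt h]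
    omega
  · rw [parityOrder_of_gt h, parityOrder_of_lt h]
    omega

theorem not_lRealizes_parityOrder_1302 (a : ℕ → ℕ) :
    ¬ LRealizes (parityOrder a) [1, 3, 0, 2] := by
  rintro ⟨s, hs, h⟩
  have l₁ : s 0 < s 1 := hs (by decide)
  have l₂ : s 1 < s 2 := hs (by decide)
  have l₃ : s 2 < s 3 := hs (by decide)
  have h₁ := h 0 1 (by decide)
  have h₂ := h 0 2 (by decide)
  have h₃ := h 0 3 (by decide)
  have h₄ := h 1 2 (by decide)
  have h₅ := h 1 3 (by decide)
  have h₆ := h 2 3 (by decide)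
  rw [parityOrder_of_lt l₁] at h₁
  rw [parityOrder_of_lt (l₁.trans l₂), minIoc_split l₁ l₂] at h₂
  rw [parityOrder_of_lt (l₁.trans (l₂.trans l₃)), minIoc_split l₁ (l₂.trans l₃),
    minIoc_split l₂ l₃] at h₃
  rw [parityOrder_of_lt l₂] at h₄
  rw [parityOrder_of_lt (l₂.trans l₃), minIoc_split l₂ l₃] at h₅
  rw [parityOrder_of_lt l₃] at h₆
  simp at h₁ h₂ h₃ h₄ h₅ h₆
  omega

theorem not_lRealizes_parityOrder_2031 (a : ℕ → ℕ) :
    ¬ LRealizes (parityOrder a) [2, 0, 3, 1] := by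
  rintro ⟨s, hs, h⟩
  have l₁ : s 0 < s 1 := hs (by decide)
  have l₂ : s 1 < s 2 := hs (by decide)
  have l₃ : s 2 < s 3 := hs (by decide)
  have h₁ := h 0 1 (by decide)
  have h₂ := h 0 2 (by decide)
  have h₃ := h 0 3 (by decide)
  have h₄ := h 1 2 (by decide)
  have h₅ := h 1 3 (by decide)
  have h₆ := h 2 3 (by decide)
  rw [parityOrder_of_lt l₁] at h₁
  rw [parityOrder_of_lt (l₁.trans l₂), minIoc_split l₁ l₂] at h₂
  rw [parityOrder_of_lt (l₁.trans (l₂.trans l₃)), minIoc_split l₁ (l₂.trans l₃),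
    minIoc_split l₂ l₃] at h₃
  rw [parityOrder_of_lt l₂] at h₄
  rw [parityOrder_of_lt (l₂.trans l₃), minIoc_split l₂ l₃] at h₅
  rw [parityOrder_of_lt l₃] at h₆
  simp at h₁ h₂ h₃ h₄ h₅ h₆
  omega

theorem finite_below_of_eventually_even {a : ℕ → ℕ} {x N : ℕ} (hN : x < N)
    (h : ∀ y, N ≤ y → minIoc a x y % 2 = 0) : {y | parityOrder a y x = true}.Finite := by
  refine (Set.finite_lt_nat N).subset fun y hy => ?_
  by_contra hy'
  have hy' : N ≤ y := not_lt.1 hy'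
  rw [Set.mem_ofPred_eq, parityOrder_of_gt (by omega)] at hy
  have := h y hy'
  omega

theorem finite_above_of_eventually_odd {a : ℕ → ℕ} {x N : ℕ} (hN : x < N)
    (h : ∀ y, N ≤ y → minIoc a x y % 2 = 1) : {y | parityOrder a x y = true}.Finite := by
  refine (Set.finite_lt_nat N).subset fun y hy => ?_
  by_contra hy'
  have hy' : N ≤ y := not_lt.1 hy'
  rw [Set.mem_ofPred_eq, parityOrder_of_lt (by omega)] at hy
  have := h y hy'
  omega

theorem finite_below_or_above_parityOrder (a : ℕ → ℕ) (x : ℕ) :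
    {y | parityOrder a y x = true}.Finite ∨ {y | parityOrder a x y = true}.Finite := by
  obtain ⟨c, N, hN, h⟩ := exists_minIoc_eventually_eq a x
  rcases Nat.mod_two_eq_zero_or_one c with hc | hc
  · exact .inl (finite_below_of_eventually_even hN fun y hy => by rw [h y hy, hc])
  · exact .inr (finite_above_of_eventually_odd hN fun y hy => by rw [h y hy, hc])

theorem primrec_parityOrder {a : ℕ → ℕ} (ha : Primrec a) : Primrec₂ (parityOrder a) := by
  have hc : Primrec₂ (minIoc a) :=
    Primrec.minBetween (ha.comp₂ Primrec₂.right) (ha.comp .snd) .fst .snd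
  refine Primrec.ite (Primrec.nat_lt.comp .fst .snd) ?_
    (Primrec.ite (Primrec.nat_lt.comp .snd .fst) ?_ (.const false))
  · exact Primrec.beq.comp (Primrec.nat_mod.comp hc (.const 2)) (.const 0)
  · exact Primrec.beq.comp
      (Primrec.nat_mod.comp (hc.comp .snd .fst) (.const 2)) (.const 1)

theorem PrimrecRel.exists_lt_comp {α : Type*} [Primcodable α] {R : ℕ → α → Prop} {f : α → ℕ}
    (hR : PrimrecRel R) (hf : Primrec f) : PrimrecPred fun i => ∃ x < f i, R x i :=
  (hR.exists_mem_list.comp (Primrec.list_range.comp hf) Primrec.id).of_eq fun i => by simp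

/-- The number `x` has been enumerated by stage `s` into the range of the `e`-th partial
recursive function. -/
def EnumeratedBy (e s x : ℕ) : Prop :=
  ∃ k < s, Code.evaln s (Denumerable.ofNat Code e) k = some x

theorem EnumeratedBy.mono {e s s' x : ℕ} (h : EnumeratedBy e s x) (hs : s ≤ s') :
    EnumeratedBy e s' x := by
  obtain ⟨k, hk, he⟩ := h
  exact ⟨k, hk.trans_le hs, Code.evaln_mono hs he⟩

theorem exists_enumeratedBy_range {g : ℕ → ℕ} (hg : Computable g) :
    ∃ e, (∀ k, ∃ s, EnumeratedBy e s (g k)) ∧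
      ∀ s x, EnumeratedBy e s x → x ∈ Set.range g := by
  obtain ⟨c, hc⟩ := Code.exists_code.1 (Partrec.nat_iff.1 hg)
  refine ⟨Encodable.encode c, fun k => ?_, ?_⟩
  · have hk : g k ∈ Code.eval c k := by simp [hc]
    obtain ⟨s, hs⟩ := Code.evaln_complete.1 hk
    exact ⟨s, k, Code.evaln_bound hs, by simpa using hs⟩
  · rintro s x ⟨k, -, hk⟩
    have hx : x ∈ Code.eval c k := Code.evaln_sound (by simpa using hk)
    exact ⟨k, by simpa [hc, eq_comm] using hx⟩

theorem primrecPred_enumeratedBy {α : Type*} [Primcodable α] {e s x : α → ℕ} (he : Primrec e)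
    (hs : Primrec s) (hx : Primrec x) : PrimrecPred fun i => EnumeratedBy (e i) (s i) (x i) := by
  have hR : PrimrecRel fun (k : ℕ) (i : α) =>
      Code.evaln (s i) (Denumerable.ofNat Code (e i)) k = some (x i) := by
    refine Primrec.eq.comp (Code.primrec_evaln.comp (.pair (.pair (hs.comp .snd)
      ((Primrec.ofNat Code).comp (he.comp .snd))) .fst)) (Primrec.option_some.comp (hx.comp .snd))
  exact hR.exists_lt_comp hs

/-- After the history `h`, the requirement `p` has a candidate that it may still move, and none of
its candidates is already controlled by it. -/
def Pending (h : List ℕ) (p : ℕ) : Prop :=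
  (∃ x < h.length, EnumeratedBy (p / 2) h.length x ∧
    p < minBetween (fun i => h.getD i 0) h.length x h.length) ∧
  ¬ ∃ x < h.length, EnumeratedBy (p / 2) h.length x ∧
    minBetween (fun i => h.getD i 0) h.length x h.length = p

theorem primrecRel_pending : PrimrecRel Pending := by
  have hlen : Primrec fun q : ℕ × List ℕ × ℕ => q.2.1.length :=
    Primrec.list_length.comp (Primrec.fst.comp .snd)
  have hp : Primrec fun q : ℕ × List ℕ × ℕ => q.2.2 := Primrec.snd.comp .snd
  have hE : PrimrecPred fun q : ℕ × List ℕ × ℕ =>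
      EnumeratedBy (q.2.2 / 2) q.2.1.length q.1 :=
    primrecPred_enumeratedBy (Primrec.nat_div.comp hp (.const 2)) hlen .fst
  have hm : Primrec fun q : ℕ × List ℕ × ℕ =>
      minBetween (fun i => q.2.1.getD i 0) q.2.1.length q.1 q.2.1.length :=
    Primrec.minBetween (a := fun (q : ℕ × List ℕ × ℕ) i => q.2.1.getD i 0)
      ((Primrec.list_getD 0).comp (Primrec.fst.comp (Primrec.snd.comp .fst)) .snd) hlen .fst hlen
  have h₁ : PrimrecRel fun (x : ℕ) (q : List ℕ × ℕ) => EnumeratedBy (q.2 / 2) q.1.length x ∧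
      q.2 < minBetween (fun i => q.1.getD i 0) q.1.length x q.1.length :=
    hE.and (Primrec.nat_lt.comp hp hm)
  have h₂ : PrimrecRel fun (x : ℕ) (q : List ℕ × ℕ) => EnumeratedBy (q.2 / 2) q.1.length x ∧
      minBetween (fun i => q.1.getD i 0) q.1.length x q.1.length = q.2 :=
    hE.and (Primrec.eq.comp hm hp)
  have hl : Primrec fun q : List ℕ × ℕ => q.1.length := Primrec.list_length.comp .fst
  exact (h₁.exists_lt_comp hl).and (h₂.exists_lt_comp hl).not

open Classical in
/-- The least pending requirement after the history `h`, or `h.length` if there is none below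
`h.length`. -/
noncomputable def nextLabel (h : List ℕ) : ℕ :=
  (List.range h.length).findIdx fun p => decide (Pending h p)

theorem primrec_nextLabel : Primrec nextLabel := by
  classical
  exact Primrec.list_findIdx (Primrec.list_range.comp .list_length) primrecRel_pending.decide

theorem nextLabel_le (h : List ℕ) : nextLabel h ≤ h.length := by
  classical
  simpa [nextLabel] using
    List.findIdx_le_length (xs := List.range h.length) (p := fun p => decide (Pending h p))

theorem pending_nextLabel {h : List ℕ} (hlt : nextLabel h < h.length) :
    Pending h (nextLabel h) := by
  classical
  have := List.findIdx_getElem (xs := List.range h.length) (p := fun p => decide (Pending h p))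
    (w := by simpa [nextLabel] using hlt)
  simpa [nextLabel] using this

theorem not_pending_of_lt_nextLabel {h : List ℕ} {p : ℕ} (hp : p < nextLabel h) :
    ¬ Pending h p := by
  classical
  have := List.not_of_lt_findIdx (xs := List.range h.length)
    (p := fun p => decide (Pending h p)) hp
  simpa using this

/-- The list of the first `n` labels of the construction. -/
noncomputable def labelHistory : ℕ → List ℕ
  | 0 => []
  | n + 1 => labelHistory n ++ [nextLabel (labelHistory n)]

/-- The requirement acting at stage `n` of the construction. -/
noncomputable def label (n : ℕ) : ℕ := nextLabel (labelHistory n)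

@[simp]
theorem length_labelHistory (n : ℕ) : (labelHistory n).length = n := by
  induction n with
  | zero => rfl
  | succ n ih => simp [labelHistory, ih]

theorem getD_labelHistory {i n : ℕ} (h : i < n) : (labelHistory n).getD i 0 = label i := by
  induction n with
  | zero => omega
  | succ n ih =>
    rcases Nat.lt_succ_iff_lt_or_eq.1 h with h' | rfl
    · rw [labelHistory, List.getD_append _ _ _ _ (by simpa using h'), ih h']
    · simp [labelHistory, label]

theorem primrec_label : Primrec label := by
  refine primrec_nextLabel.comp ((Primrec.nat_rec₁ (f := fun _ l => l ++ [nextLabel l]) []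
    (Primrec.list_concat.comp .snd (primrec_nextLabel.comp .snd))).of_eq fun n => ?_)
  induction n with
  | zero => rfl
  | succ n ih => simp only [labelHistory, ← ih]

theorem pending_labelHistory_iff {s p : ℕ} (hp : p < s) :
    Pending (labelHistory s) p ↔
      (∃ x < s, EnumeratedBy (p / 2) s x ∧ ∀ u, x < u → u < s → p < label u) ∧
      ¬ ∃ x < s, EnumeratedBy (p / 2) s x ∧ (∀ u, x < u → u < s → p ≤ label u) ∧
        ∃ u, x < u ∧ u < s ∧ label u = p := by
  have hm : ∀ x, minBetween (fun i => (labelHistory s).getD i 0) s x s =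
      minBetween label s x s := fun x => minBetween_congr fun u hu => getD_labelHistory hu
  have hlt : ∀ x, p < minBetween label s x s ↔ ∀ u, x < u → u < s → p < label u := fun x => by
    rw [← Nat.succ_le_iff, le_minBetween]
    simp only [Nat.succ_le_iff, hp, true_and]
  have heq : ∀ x, minBetween label s x s = p ↔ (∀ u, x < u → u < s → p ≤ label u) ∧
      ∃ u, x < u ∧ u < s ∧ label u = p := fun x => by
    have hle := le_minBetween (a := label) (b := s) (x := x) (p := p) s
    simp only [hp.le, true_and] at hle
    rw [← hle]
    constructor
    · intro h
      refine ⟨h.ge, ?_⟩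
      have hn := mt (hlt x).2 h.not_gt
      push Not at hn
      obtain ⟨u, h₁, h₂, h₃⟩ := hn
      exact ⟨u, h₁, h₂, le_antisymm h₃ (hle.1 h.ge u h₁ h₂)⟩
    · rintro ⟨h, u, h₁, h₂, h₃⟩
      exact le_antisymm (not_lt.1 fun h' => ((hlt x).1 h' u h₁ h₂).ne' h₃) h
  simp only [Pending, length_labelHistory, hm, hlt, heq]

theorem exists_forall_lt_label (p : ℕ) : ∃ t, p ≤ t ∧ ∀ s, t < s → p < label s := by
  induction p using Nat.strong_induction_on with
  | _ p ih =>
    obtain ⟨t, hpt, ht⟩ : ∃ t, p ≤ t ∧ ∀ s, t < s → p ≤ label s := by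
      cases p with
      | zero => exact ⟨0, le_rfl, fun _ _ => Nat.zero_le _⟩
      | succ q =>
        obtain ⟨t, -, ht⟩ := ih q (Nat.lt_succ_self q)
        exact ⟨max t (q + 1), le_max_right _ _, fun s hs => ht s ((le_max_left _ _).trans_lt hs)⟩
    by_cases hact : ∃ s, t < s ∧ label s = p
    · obtain ⟨s, hts, hs⟩ := hact
      refine ⟨s, by omega, fun s' hs' => (ht s' (by omega)).lt_of_ne fun hs'p => ?_⟩
      have h₁ : Pending (labelHistory s) p := by
        have := pending_nextLabel (h := labelHistory s) (by
          rw [length_labelHistory]; change label s < s; omega)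
        rwa [show nextLabel (labelHistory s) = p from hs] at this
      have h₂ : Pending (labelHistory s') p := by
        have := pending_nextLabel (h := labelHistory s') (by
          rw [length_labelHistory]; change label s' < s'; omega)
        rwa [show nextLabel (labelHistory s') = p from hs'p.symm] at this
      rw [pending_labelHistory_iff (by omega)] at h₁ h₂
      obtain ⟨x, hx, hE, hu⟩ := h₁.1
      refine h₂.2 ⟨x, by omega, hE.mono hs'.le, fun u hxu hus' => ?_, s, hx, hs', hs⟩
      rcases lt_or_ge u s with h | h
      · exact (hu u hxu h).le
      · exact ht u (by omega)
    · push Not at hact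
      exact ⟨t, hpt, fun s hs => (ht s hs).lt_of_ne (hact s hs).symm⟩

/-- For every computable increasing sequence `g` and every `b < 2`, some value of `g` ends up on the
side of the order that the parity `b` encodes. -/
theorem exists_eventually_parity {g : ℕ → ℕ} (hg : Computable g) (hmono : StrictMono g)
    {b : ℕ} (hb : b < 2) :
    ∃ x ∈ Set.range g, ∃ N, x < N ∧ ∀ y, N ≤ y → minIoc label x y % 2 = b := by
  obtain ⟨e, henum, hrange⟩ := exists_enumeratedBy_range hg
  obtain ⟨t, hpt, ht⟩ := exists_forall_lt_label (2 * e + b)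
  have hpe : (2 * e + b) / 2 = e := by omega
  obtain ⟨s₀, hs₀⟩ := henum (t + 1)
  have hgt : t < g (t + 1) := (Nat.lt_succ_self t).trans_le hmono.le_apply
  obtain ⟨s, hs⟩ : ∃ s, s = max s₀ (g (t + 1) + 1) := ⟨_, rfl⟩
  have hs₁ : s₀ ≤ s := by omega
  have hs₂ : g (t + 1) < s := by omega
  have hnot : ¬ Pending (labelHistory s) (2 * e + b) :=
    not_pending_of_lt_nextLabel (ht s (by omega))
  rw [pending_labelHistory_iff (by omega), hpe] at hnot
  obtain ⟨x, hx, hE, hle, u, hxu, hus, hu⟩ := not_not.1 fun h => hnot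
    ⟨⟨g (t + 1), hs₂, hs₀.mono hs₁, fun u hu _ => ht u (by omega)⟩, h⟩
  refine ⟨x, hrange s x hE, s, hx, fun y hy => ?_⟩
  rw [minIoc_eq_of_forall_le hxu (by omega) fun v hxv _ => ?_, hu]
  · omega
  · rw [hu]
    rcases lt_or_ge v s with h | h
    · exact hle v hxv h
    · exact (ht v (by omega)).le

theorem infinite_of_eventually_parity {P : ℕ → Prop} {b : ℕ} (hb : b < 2)
    (hP : ∀ x N, x < N → (∀ y, N ≤ y → minIoc label x y % 2 = b) → P x) :
    {x | P x}.Infinite := by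
  refine Set.infinite_of_forall_exists_gt fun B => ?_
  obtain ⟨_, ⟨n, rfl⟩, N, hN, h⟩ := exists_eventually_parity (g := fun n => n + (B + 1))
    (Primrec.nat_add.comp .id (.const _)).to_comp (fun _ _ h => by simpa using h) hb
  exact ⟨_, hP _ N hN h, by dsimp only; omega⟩

theorem orderTypeOmegaPlusOmegaStar_parityOrder_label :
    OrderTypeOmegaPlusOmegaStar (parityOrder label) :=
  ⟨finite_below_or_above_parityOrder label,
    infinite_of_eventually_parity (b := 0) (by decide) fun _ _ =>
      finite_below_of_eventually_even,
    infinite_of_eventually_parity (b := 1) (by decide) fun _ _ =>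
      finite_above_of_eventually_odd⟩

theorem IsLinearRel.strictMono_of_succ {r : ℕ → ℕ → Bool} (hr : IsLinearRel r) {g : ℕ → ℕ}
    (h : ∀ n, r (g n) (g (n + 1)) = true) {m n : ℕ} (hmn : m < n) : r (g m) (g n) = true := by
  induction n, hmn using Nat.le_induction with
  | base => exact h m
  | succ n _ ih => exact hr.2.1 _ _ _ ih (h n)

theorem IsLinearRel.strictAnti_of_succ {r : ℕ → ℕ → Bool} (hr : IsLinearRel r) {g : ℕ → ℕ}
    (h : ∀ n, r (g (n + 1)) (g n) = true) {m n : ℕ} (hmn : m < n) : r (g n) (g m) = true := by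
  induction n, hmn using Nat.le_induction with
  | base => exact h m
  | succ n _ ih => exact hr.2.1 _ _ _ (h n) ih

theorem not_computable_monotone_parityOrder_label :
    ¬ ∃ g : ℕ → ℕ, Computable g ∧ StrictMono g ∧
      ((∀ n, parityOrder label (g n) (g (n + 1)) = true) ∨
        (∀ n, parityOrder label (g (n + 1)) (g n) = true)) := by
  rintro ⟨g, hg, hmono, h | h⟩
  · obtain ⟨_, ⟨k, rfl⟩, N, -, hpar⟩ := exists_eventually_parity (b := 1) hg hmono (by decide)
    have hk : k < max (k + 1) N := lt_max_of_lt_left k.lt_succ_self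
    have h' := (isLinearRel_parityOrder label).strictMono_of_succ h hk
    rw [parityOrder_of_lt (hmono hk), hpar _ ((le_max_right _ _).trans (hmono.le_apply))] at h'
    omega
  · obtain ⟨_, ⟨k, rfl⟩, N, -, hpar⟩ := exists_eventually_parity (b := 0) hg hmono (by decide)
    have hk : k < max (k + 1) N := lt_max_of_lt_left k.lt_succ_self
    have h' := (isLinearRel_parityOrder label).strictAnti_of_succ h hk
    rw [parityOrder_of_gt (hmono hk), hpar _ ((le_max_right _ _).trans (hmono.le_apply))] at h'
    omega

/-- There is a computable linear order of type `ω + ω*` avoiding 1302 and 2031, with no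
computable infinite monotonous sequence. -/
theorem exists_order_avoiding_1302_2031_no_computable_monotone :
    ∃ r : ℕ → ℕ → Bool, Computable₂ r ∧ IsLinearRel r ∧ OrderTypeOmegaPlusOmegaStar r ∧
      ¬ LRealizes r [1, 3, 0, 2] ∧ ¬ LRealizes r [2, 0, 3, 1] ∧
      ¬ ∃ g : ℕ → ℕ, Computable g ∧ StrictMono g ∧
        ((∀ n, r (g n) (g (n + 1)) = true) ∨ (∀ n, r (g (n + 1)) (g n) = true)) := by
  exact ⟨parityOrder label, (primrec_parityOrder primrec_label).to_comp,
    isLinearRel_parityOrder label, orderTypeOmegaPlusOmegaStar_parityOrder_label,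
    not_lRealizes_parityOrder_1302 label, not_lRealizes_parityOrder_2031 label,
    not_computable_monotone_parityOrder_label⟩
end
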